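/- (Top-2 reduction of the curvature gap.) Let a = p_y, b = p_{y*} with y* ≠ y, S = a + b, τ = 1 − S, and ū = a/S, and define the curvature gap Δ_{y*,y} = (H_z g)_{y*} − (H_z g)_y. Then Δ_{y*,y} = 4ū(1 − ū)² + ζ with |ζ| ≤ 6τ. -/

import Mathlib

/-- The softmax map `ℝ^V → ℝ^V`. -/
noncomputable def softmax {V : ℕ} (z : Fin V → ℝ) : Fin V → ℝ :=
  fun i => Real.exp (z i) / ∑ j, Real.exp (z j)

/-- The one-hot vector of a class index `y`. -/
noncomputable def oneHot {V : ℕ} (y : Fin V) : Fin V → ℝ := Pi.single y 1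

/-- The softmax logit Hessian `H_z = diag(p) − p pᵀ`. -/
noncomputable def logitHess {V : ℕ} (p : Fin V → ℝ) : Matrix (Fin V) (Fin V) ℝ :=
  Matrix.diagonal p - Matrix.vecMulVec p p

/-! With `r = ∑ⱼ pⱼ² - a² - b²` the contribution of the other classes to `∑ⱼ pⱼ²`, the curvature
gap is exactly `2ab(1 + b - a) + (b - a)(Sτ - r) + aτ`. If no other class has mass, then
`τ = r = 0`, `a = ū` and `b = 1 - ū`, and only `4ū(1 - ū)²` is left. In general, passing from
`(a, b)` to `(ū, 1 - ū)` in the first term costs at most `5τ/2`, and the other two terms are at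
most `τ` each because `0 ≤ r ≤ τ²`. -/

open Finset Matrix

theorem sum_sq_sub_sum_sq_le_sq_sum_sub_sum {ι R : Type*} [CommRing R] [PartialOrder R]
    [IsOrderedRing R] {s t : Finset ι} {f : ι → R} (hst : s ⊆ t)
    (hf : ∀ i ∈ t, i ∉ s → 0 ≤ f i) :
    ∑ i ∈ t, f i ^ 2 - ∑ i ∈ s, f i ^ 2 ≤ (∑ i ∈ t, f i - ∑ i ∈ s, f i) ^ 2 := by
  classical
  rw [← sum_sdiff_eq_sub hst, ← sum_sdiff_eq_sub hst]
  refine sum_sq_le_sq_sum_of_nonneg fun i hi => ?_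
  obtain ⟨hit, his⟩ := mem_sdiff.1 hi
  exact hf i hit his

theorem abs_scaled_sub_twoClass_le {S u : ℝ} (hS0 : 0 ≤ S) (hS1 : S ≤ 1) (hu0 : 0 ≤ u)
    (hu1 : u ≤ 1) :
    |2 * (S * u) * (S * (1 - u)) * (1 + S * (1 - u) - S * u) - 4 * u * (1 - u) ^ 2|
      ≤ 5 / 2 * (1 - S) := by
  have hτ : 0 ≤ 1 - S := sub_nonneg.2 hS1
  have hfactor : 2 * (S * u) * (S * (1 - u)) * (1 + S * (1 - u) - S * u) - 4 * u * (1 - u) ^ 2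
      = -(2 * u * (1 - u) * (1 + S + (1 + S + S ^ 2) * (1 - 2 * u)) * (1 - S)) := by ring
  have hweight0 : 0 ≤ 2 * u * (1 - u) := mul_nonneg (by positivity) (sub_nonneg.2 hu1)
  have hweight : 2 * u * (1 - u) ≤ 1 / 2 := by linarith [sq_nonneg (2 * u - 1)]
  have hlin : |1 - 2 * u| ≤ 1 := abs_le.2 ⟨by linarith, by linarith⟩
  have hcofactor : |1 + S + (1 + S + S ^ 2) * (1 - 2 * u)| ≤ 5 :=
    calc |1 + S + (1 + S + S ^ 2) * (1 - 2 * u)|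
        ≤ |1 + S| + |1 + S + S ^ 2| * |1 - 2 * u| := by
          rw [← abs_mul]
          exact abs_add_le _ _
      _ = 1 + S + (1 + S + S ^ 2) * |1 - 2 * u| := by
          rw [abs_of_nonneg (by positivity), abs_of_nonneg (by positivity)]
      _ ≤ 1 + 1 + (1 + 1 + 1 ^ 2) * 1 := by gcongr
      _ = 5 := by norm_num
  rw [hfactor, abs_neg, abs_mul _ (1 - S), abs_mul (2 * u * (1 - u)), abs_of_nonneg hweight0,
    abs_of_nonneg hτ]
  gcongr
  calc 2 * u * (1 - u) * |1 + S + (1 + S + S ^ 2) * (1 - 2 * u)|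
      ≤ 1 / 2 * 5 := by gcongr
    _ = 5 / 2 := by norm_num

theorem abs_topTwo_sub_twoClass_le {a b : ℝ} (ha : 0 ≤ a) (hb : 0 ≤ b) (hpos : 0 < a + b)
    (hab : a + b ≤ 1) :
    |2 * a * b * (1 + b - a) - 4 * (a / (a + b)) * (1 - a / (a + b)) ^ 2|
      ≤ 5 / 2 * (1 - (a + b)) := by
  have haS : (a + b) * (a / (a + b)) = a := mul_div_cancel₀ a hpos.ne'
  have hbS : (a + b) * (1 - a / (a + b)) = b := by rw [mul_one_sub, haS, add_sub_cancel_left]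
  simpa only [haS, hbS] using abs_scaled_sub_twoClass_le hpos.le hab
    (div_nonneg ha hpos.le) ((div_le_one hpos).2 (le_add_of_nonneg_right hb))

theorem abs_tail_le {a b r : ℝ} (ha : 0 ≤ a) (hb : 0 ≤ b) (hab : a + b ≤ 1)
    (hr0 : 0 ≤ r) (hr : r ≤ (1 - (a + b)) ^ 2) :
    |(b - a) * ((a + b) * (1 - (a + b)) - r) + a * (1 - (a + b))| ≤ 2 * (1 - (a + b)) := by
  set τ := 1 - (a + b)
  have hτ0 : 0 ≤ τ := sub_nonneg.2 hab
  have hdiff : |b - a| ≤ 1 := abs_le.2 ⟨by linarith, by linarith⟩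
  have hmass : (a + b) * τ ≤ τ := mul_le_of_le_one_left hτ0 hab
  have hτsq : τ ^ 2 ≤ τ := pow_le_of_le_one hτ0 (by linarith) two_ne_zero
  have htail : |(a + b) * τ - r| ≤ τ :=
    abs_sub_le_of_nonneg_of_le (by positivity) hmass hr0 (hr.trans hτsq)
  calc |(b - a) * ((a + b) * τ - r) + a * τ|
      ≤ |b - a| * |(a + b) * τ - r| + |a * τ| := by
        rw [← abs_mul]
        exact abs_add_le _ _
    _ ≤ 1 * τ + 1 * τ := by
        rw [abs_of_nonneg (mul_nonneg ha hτ0)]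
        gcongr
        linarith
    _ = 2 * τ := by ring

section CurvatureGap

variable {V : ℕ}

/-- The curvature gap `Δ_{k,y} = (H g)_k - (H g)_y` of a weight vector `p`, where
`H = diag(p) - p pᵀ` and `g` is the residual `p - y` for the true class `y`. -/
noncomputable def curvatureGap (p : Fin V → ℝ) (k y : Fin V) : ℝ :=
  (logitHess p *ᵥ (p - oneHot y)) k - (logitHess p *ᵥ (p - oneHot y)) y

theorem logitHess_mulVec_apply (p g : Fin V → ℝ) (i : Fin V) :
    (logitHess p *ᵥ g) i = p i * (g i - p ⬝ᵥ g) := by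
  simp [logitHess, sub_mulVec, mulVec_diagonal, vecMulVec_mulVec, mul_sub, mul_comm]

theorem dotProduct_sub_oneHot (p : Fin V → ℝ) (y : Fin V) :
    p ⬝ᵥ (p - oneHot y) = ∑ j, p j ^ 2 - p y := by
  rw [dotProduct_sub, oneHot, dotProduct_single_one]
  simp only [dotProduct, sq]

theorem curvatureGap_eq (p : Fin V → ℝ) {k y : Fin V} (hky : k ≠ y) :
    curvatureGap p k y =
      2 * p y * p k * (1 + p k - p y)
        + ((p k - p y) * ((p y + p k) * (1 - (p y + p k))
            - (∑ j, p j ^ 2 - (p y ^ 2 + p k ^ 2)))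
          + p y * (1 - (p y + p k))) := by
  have hgy : (p - oneHot y) y = p y - 1 := by simp [oneHot]
  have hgk : (p - oneHot y) k = p k := by simp [oneHot, hky]
  rw [curvatureGap, logitHess_mulVec_apply, logitHess_mulVec_apply, dotProduct_sub_oneHot, hgy, hgk]
  ring

theorem softmax_pos (z : Fin V → ℝ) (i : Fin V) : 0 < softmax z i :=
  div_pos (Real.exp_pos _) (sum_pos (fun _ _ => Real.exp_pos _) ⟨i, mem_univ i⟩)

theorem softmax_mem_stdSimplex [NeZero V] (z : Fin V → ℝ) : softmax z ∈ stdSimplex ℝ (Fin V) := by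
  have hsum : 0 < ∑ j, Real.exp (z j) := sum_pos (fun _ _ => Real.exp_pos _) univ_nonempty
  refine ⟨fun i => (softmax_pos z i).le, ?_⟩
  simp only [softmax, ← sum_div, div_self hsum.ne']

theorem statement16_general {p : Fin V → ℝ} (hp : p ∈ stdSimplex ℝ (Fin V)) {y k : Fin V}
    (hky : k ≠ y) (hpos : 0 < p y + p k) :
    |curvatureGap p k y - 4 * (p y / (p y + p k)) * (1 - p y / (p y + p k)) ^ 2|
      ≤ 9 / 2 * (1 - (p y + p k)) := by
  obtain ⟨hp0, hp1⟩ := hp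
  have htop : p y + p k ≤ 1 := by
    rw [← hp1]
    exact add_le_sum (fun i _ => hp0 i) (mem_univ y) (mem_univ k) hky.symm
  have htail0 : 0 ≤ ∑ j, p j ^ 2 - (p y ^ 2 + p k ^ 2) :=
    sub_nonneg.2 (add_le_sum (fun i _ => sq_nonneg (p i)) (mem_univ y) (mem_univ k) hky.symm)
  have htail : ∑ j, p j ^ 2 - (p y ^ 2 + p k ^ 2) ≤ (1 - (p y + p k)) ^ 2 := by
    simpa only [sum_pair hky.symm, hp1] using
      sum_sq_sub_sum_sq_le_sq_sum_sub_sum (subset_univ {y, k}) fun i _ _ => hp0 i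
  have htopTwo := abs_topTwo_sub_twoClass_le (hp0 y) (hp0 k) hpos htop
  have htailTerms := abs_tail_le (hp0 y) (hp0 k) htop htail0 htail
  rw [curvatureGap_eq p hky, add_sub_right_comm]
  exact (abs_add_le _ _).trans (by linarith)

end CurvatureGap

/-- Top-2 reduction of the curvature gap. Let `p = softmax(z)`,
`g = p − y` (one-hot `y`), `H_z = diag(p) − p pᵀ`, and `y* ≠ y`. With `a = p_y`,
`b = p_{y*}`, `S = a + b`, `τ = 1 − S`, `ū = a/S`, the curvature gap
`Δ_{y*,y} = (H_z g)_{y*} − (H_z g)_y` satisfies `Δ_{y*,y} = 4ū(1 − ū)² + ζ` with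
`|ζ| ≤ 6τ`. -/
theorem statement16 (V : ℕ) (hV : 2 ≤ V) (z : Fin V → ℝ) (y ystar : Fin V)
    (hne : ystar ≠ y) :
    ∃ ζ : ℝ,
      (logitHess (softmax z)).mulVec (softmax z - oneHot y) ystar
          - (logitHess (softmax z)).mulVec (softmax z - oneHot y) y
        = 4 * (softmax z y / (softmax z y + softmax z ystar))
            * (1 - softmax z y / (softmax z y + softmax z ystar)) ^ 2 + ζ ∧
      |ζ| ≤ 6 * (1 - (softmax z y + softmax z ystar)) := by
  have : NeZero V := ⟨by lia⟩
  have hgap := statement16_general (softmax_mem_stdSimplex z) hne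
    (add_pos (softmax_pos z y) (softmax_pos z ystar))
  exact ⟨_, (add_sub_cancel _ _).symm, hgap.trans (by linarith [(abs_nonneg _).trans hgap])⟩
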